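/- Let p ∈ [1,∞) with p ≠ 2 and let G be a finite group with card(G) > 2. Then ‖𝟙₀‖_{(p)} > 1, i.e., the operator norm of the convolution operator λ_p(𝟙₀) on ℓ^p(G) is strictly greater than 1. (Hence 𝟙₀ is a non-unital identity of the augmentation ideal F₀^p(G).) -/

import Mathlib

/-!
`λ_p(𝟙₀)` is `b ↦ b − mean(b)`. If its norm were at most `1`, then `‖f‖_p ≤ ‖f + c‖_p` for every
mean-zero `f` and every constant `c`. For `f = (n−1, −1, …, −1)` and `|c| < 1`,
`‖f + c‖_p^p = (n−1+c)^p + (n−1)(1−c)^p` (`norm_spike_rpow`), whose derivative at `c = 0` is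
`p((n−1)^{p−1} − (n−1))`. This is nonzero because `n > 2` and `p ≠ 2`, so `c = 0` is not a local
minimum (`exists_lt_at_zero`), a contradiction.
-/


open scoped ENNReal

noncomputable section

/-- Convolution of functions on a finite group: `(a * b) g = ∑ h, a h * b (h⁻¹ g)`. -/
def conv {G : Type*} [Group G] [Fintype G] (a b : G → ℂ) : G → ℂ :=
  fun g => ∑ h : G, a h * b (h⁻¹ * g)

/-- The indicator function `δ_g`. -/
def delta {G : Type*} [Group G] [DecidableEq G] (g : G) : G → ℂ :=
  fun h => if h = g then 1 else 0

/-- `Δ_g = δ_g − δ_{1_G}`. -/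
def Del {G : Type*} [Group G] [DecidableEq G] (g : G) : G → ℂ :=
  delta g - delta 1

/-- `𝟙₀ = −(1/n) ∑_{g ∈ G} Δ_g`, the identity of the augmentation ideal `ℓ₀¹(G)`. -/
def one0 (G : Type*) [Group G] [Fintype G] [DecidableEq G] : G → ℂ :=
  -((Fintype.card G : ℂ))⁻¹ • ∑ g : G, Del g

/-- `λ_p(a)`: the operator of left convolution by `a` on `ℓ^p(G)`. -/
def lam {G : Type*} [Group G] [Fintype G] (p : ℝ≥0∞) [Fact (1 ≤ p)] (a : G → ℂ) :
    (PiLp p fun _ : G => ℂ) →L[ℂ] (PiLp p fun _ : G => ℂ) :=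
  LinearMap.toContinuousLinearMap
    { toFun := fun b => (WithLp.equiv p (G → ℂ)).symm (conv a (WithLp.equiv p (G → ℂ) b))
      map_add' := by
        intro b c
        apply (WithLp.equiv p (G → ℂ)).injective
        funext g
        simp [conv, mul_add, Finset.sum_add_distrib]
      map_smul' := by
        intro c b
        apply (WithLp.equiv p (G → ℂ)).injective
        funext g
        simp [conv, Finset.mul_sum, mul_left_comm] }

theorem one0_apply {G : Type*} [Group G] [Fintype G] [DecidableEq G] (h : G) :
    one0 G h = (if h = 1 then 1 else 0) - (Fintype.card G : ℂ)⁻¹ := by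
  have hn : (Fintype.card G : ℂ) ≠ 0 := by exact_mod_cast Fintype.card_ne_zero
  have hD : ∀ g : G, Del g h = (if h = g then 1 else 0) - (if h = 1 then 1 else 0) :=
    fun _ => rfl
  simp only [one0, Pi.smul_apply, Finset.sum_apply, hD,
    Finset.sum_sub_distrib, Finset.sum_ite_eq, Finset.mem_univ, if_true, Finset.sum_const,
    Finset.card_univ, smul_eq_mul, nsmul_eq_mul]
  field_simp
  ring

theorem conv_one0 {G : Type*} [Group G] [Fintype G] [DecidableEq G] (b : G → ℂ) (g : G) :
    conv (one0 G) b g = b g - (Fintype.card G : ℂ)⁻¹ * ∑ h : G, b h := by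
  have hs : ∑ h : G, b (h⁻¹ * g) = ∑ h : G, b h :=
    Fintype.sum_equiv ((Equiv.inv G).trans (Equiv.mulRight g)) _ _ (fun h => by simp)
  simp [conv, one0_apply, sub_mul, Finset.sum_sub_distrib, ← Finset.mul_sum, hs]

/-- The function `f + c`, where `f` is the mean-zero function equal to `n − 1` at the identity and
to `−1` elsewhere. -/
def spike (G : Type*) [Group G] [Fintype G] [DecidableEq G] (c : ℝ) : G → ℂ :=
  fun g => if g = 1 then (((Fintype.card G : ℝ) - 1 + c : ℝ) : ℂ) else ((c - 1 : ℝ) : ℂ)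

theorem sum_ite_one {G M : Type*} [Group G] [Fintype G] [DecidableEq G] [CommRing M] (x y : M) :
    ∑ g : G, (if g = 1 then x else y) = x + ((Fintype.card G : M) - 1) * y := by
  have h : ∀ g : G, (if g = 1 then x else y) = (if g = 1 then x - y else 0) + y := by
    intro g; split_ifs <;> simp
  simp only [h, Finset.sum_add_distrib, Finset.sum_ite_eq', Finset.mem_univ,
    if_true, Finset.sum_const, Finset.card_univ, nsmul_eq_mul]
  ring

/-- Subtracting its mean `c` from `f + c` gives back `f`. -/
theorem conv_one0_spike {G : Type*} [Group G] [Fintype G] [DecidableEq G] (c : ℝ) :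
    conv (one0 G) (spike G c) = spike G 0 := by
  have hn : (Fintype.card G : ℂ) ≠ 0 := by exact_mod_cast Fintype.card_ne_zero
  funext g
  rw [conv_one0]
  simp only [spike, sum_ite_one]
  split_ifs <;> push_cast <;> field_simp <;> ring

theorem norm_spike_rpow {G : Type*} [Group G] [Fintype G] [DecidableEq G]
    (hcard : 2 < Fintype.card G) (p : ℝ≥0∞) [Fact (1 ≤ p)] (hp : 0 < p.toReal)
    {c : ℝ} (hc : |c| < 1) :
    ‖(WithLp.equiv p (G → ℂ)).symm (spike G c)‖ ^ p.toReal =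
      ((Fintype.card G : ℝ) - 1 + c) ^ p.toReal +
        ((Fintype.card G : ℝ) - 1) * (1 - c) ^ p.toReal := by
  have hN : (2 : ℝ) < Fintype.card G := by exact_mod_cast hcard
  obtain ⟨h1, h2⟩ := abs_lt.mp hc
  rw [PiLp.norm_eq_sum hp, ← Real.rpow_mul (Finset.sum_nonneg fun i _ => by positivity),
    one_div, inv_mul_cancel₀ hp.ne', Real.rpow_one, ← sum_ite_one (G := G)]
  refine Finset.sum_congr rfl fun g _ => ?_
  change ‖spike G c g‖ ^ _ = _
  unfold spike
  split_ifs
  · rw [Complex.norm_real, Real.norm_of_nonneg (by linarith)]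
  · rw [Complex.norm_real, Real.norm_of_nonpos (by linarith), neg_sub]

/-- The derivative of `c ↦ (m + c)^q + m (1 − c)^q` at `0` is `q (m^{q−1} − m) ≠ 0`, so arbitrarily
near `0` this function takes values below its value at `0`. -/
theorem exists_lt_at_zero {m q : ℝ} (hm : 1 < m) (hq : 1 ≤ q) (hq2 : q ≠ 2) :
    ∃ c : ℝ, |c| < 1 ∧ (m + c) ^ q + m * (1 - c) ^ q < (m + 0) ^ q + m * (1 - 0) ^ q := by
  by_contra! H
  have hmin : IsLocalMin (fun c : ℝ => (m + c) ^ q + m * (1 - c) ^ q) 0 := by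
    filter_upwards [Metric.ball_mem_nhds (0 : ℝ) one_pos] with c hc
    exact H c (by simpa using hc)
  have hd1 : HasDerivAt (fun c : ℝ => (m + c) ^ q) (1 * q * (m + 0) ^ (q - 1)) 0 :=
    ((hasDerivAt_id (0 : ℝ)).const_add m).rpow_const (Or.inr hq)
  have hd2 : HasDerivAt (fun c : ℝ => (1 - c) ^ q) (-1 * q * (1 - 0) ^ (q - 1)) 0 :=
    ((hasDerivAt_id (0 : ℝ)).const_sub 1).rpow_const (Or.inr hq)
  have h0 := hmin.hasDerivAt_eq_zero (hd1.add (hd2.const_mul m))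
  have h1 : q * (m ^ (q - 1) - m) = 0 := by
    simp only [add_zero, sub_zero, Real.one_rpow] at h0
    linarith
  have h2 : m ^ (q - 1) = m ^ (1 : ℝ) := by
    rw [Real.rpow_one]
    rcases mul_eq_zero.mp h1 with h | h <;> linarith
  have h3 : q - 1 = 1 := (Real.strictMono_rpow_of_base_gt_one hm).injective h2
  exact hq2 (by linarith)

/-- Let `p ∈ [1, ∞)` with `p ≠ 2` and let `G` be a finite group with
`card G > 2`.  Then `‖λ_p(𝟙₀)‖ > 1`: the operator norm of the convolution operator `λ_p(𝟙₀)` on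
`ℓ^p(G)` is strictly greater than `1` (hence `𝟙₀` is a non-unital identity of `F₀^p(G)`). -/
theorem one_lt_norm_one0
    (G : Type*) [Group G] [Fintype G] [DecidableEq G]
    (hcard : 2 < Fintype.card G)
    (p : ℝ≥0∞) [Fact (1 ≤ p)] (hpinf : p ≠ ∞) (hp2 : p ≠ 2) :
    1 < ‖lam p (one0 G)‖ := by
  have hN : (2 : ℝ) < Fintype.card G := by exact_mod_cast hcard
  have hq : 1 ≤ p.toReal := by
    simpa using ENNReal.toReal_mono hpinf (Fact.out : 1 ≤ p)
  have hq2 : p.toReal ≠ 2 := fun h => hp2 (by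
    rw [← ENNReal.ofReal_toReal hpinf, h]; simp)
  have hq0 : 0 < p.toReal := by linarith
  obtain ⟨c, hc, hlt⟩ :=
    exists_lt_at_zero (m := (Fintype.card G : ℝ) - 1) (by linarith) hq hq2
  by_contra! H
  have hle := (lam p (one0 G)).le_of_opNorm_le H ((WithLp.equiv p (G → ℂ)).symm (spike G c))
  have happ : lam p (one0 G) ((WithLp.equiv p (G → ℂ)).symm (spike G c)) =
      (WithLp.equiv p (G → ℂ)).symm (spike G 0) :=
    congrArg (WithLp.equiv p (G → ℂ)).symm (conv_one0_spike c)
  rw [happ, one_mul] at hle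
  have hpow := Real.rpow_le_rpow (norm_nonneg _) hle hq0.le
  rw [norm_spike_rpow hcard p hq0 hc, norm_spike_rpow hcard p hq0 (by simp)] at hpow
  linarith

end
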